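/- arXiv:1402.2214 — 2 statements merged into one kernel-verified Lean document; each statement's English description precedes it below -/
import Mathlib

section
/- Let A be a Hopf algebra over a field k with antipode S and let X be a left Yetter–Drinfel'd module over A. Define θ_X : X → X by θ_X(x) = S(x_{(-1)})·x_{(0)}. Then: (1) θ_X(h·x) = S²(h)·θ_X(x) for all h ∈ A, x ∈ X; and (2) δ(θ_X(x)) = S²(x_{(-1)}) ⊗ θ_X(x_{(0)}) for all x ∈ X. -/
open TensorProduct

noncomputable section

variable {k : Type*} [Field k]
variable {A : Type*} [Ring A] [HopfAlgebra k A]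
variable {X Y Z : Type*} [AddCommGroup X] [Module k X] [AddCommGroup Y] [Module k Y]
  [AddCommGroup Z] [Module k Z]

/-- LHS of the left Yetter–Drinfel'd compatibility condition, as a linear map
`A ⊗ X → A ⊗ X` sending `h ⊗ x` to `h₍₁₎x₍₋₁₎ ⊗ h₍₂₎ · x₍₀₎`. -/
def ydL (act : A ⊗[k] X →ₗ[k] X) (coact : X →ₗ[k] A ⊗[k] X) :
    A ⊗[k] X →ₗ[k] A ⊗[k] X :=
  TensorProduct.map (LinearMap.mul' k A) act
    ∘ₗ (TensorProduct.tensorTensorTensorComm k A A A X).toLinearMap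
    ∘ₗ TensorProduct.map (Coalgebra.comul (R := k)) coact

/-- RHS of the left Yetter–Drinfel'd compatibility condition, sending `h ⊗ x` to
`(h₍₁₎·x)₍₋₁₎ h₍₂₎ ⊗ (h₍₁₎·x)₍₀₎`. -/
def ydR (act : A ⊗[k] X →ₗ[k] X) (coact : X →ₗ[k] A ⊗[k] X) :
    A ⊗[k] X →ₗ[k] A ⊗[k] X :=
  TensorProduct.map (LinearMap.mul' k A) LinearMap.id
    ∘ₗ (TensorProduct.assoc k A A X).symm.toLinearMap
    ∘ₗ LinearMap.lTensor A (TensorProduct.comm k X A).toLinearMap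
    ∘ₗ (TensorProduct.assoc k A X A).toLinearMap
    ∘ₗ LinearMap.rTensor A coact
    ∘ₗ LinearMap.rTensor A act
    ∘ₗ (TensorProduct.assoc k A X A).symm.toLinearMap
    ∘ₗ LinearMap.lTensor A (TensorProduct.comm k A X).toLinearMap
    ∘ₗ (TensorProduct.assoc k A A X).toLinearMap
    ∘ₗ LinearMap.rTensor X (Coalgebra.comul (R := k))

/-- A left Yetter–Drinfel'd module structure over the Hopf algebra `A` on the
vector space `X`: a left action, a left coaction, and the compatibility. -/
structure IsYD (act : A ⊗[k] X →ₗ[k] X) (coact : X →ₗ[k] A ⊗[k] X) : Prop where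
  act_one : ∀ x : X, act (1 ⊗ₜ[k] x) = x
  act_mul : ∀ (a a' : A) (x : X),
    act ((a * a') ⊗ₜ[k] x) = act (a ⊗ₜ[k] act (a' ⊗ₜ[k] x))
  coassoc : (TensorProduct.assoc k A A X).toLinearMap
      ∘ₗ LinearMap.rTensor X (Coalgebra.comul (R := k)) ∘ₗ coact
      = LinearMap.lTensor A coact ∘ₗ coact
  counit_coact : (TensorProduct.lid k X).toLinearMap
      ∘ₗ LinearMap.rTensor X (Coalgebra.counit (R := k)) ∘ₗ coact = LinearMap.id
  yd : ydL act coact = ydR act coact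

/-- The diagonal action `h · (x ⊗ y) = h₍₁₎·x ⊗ h₍₂₎·y` on a tensor product. -/
def tAct (actX : A ⊗[k] X →ₗ[k] X) (actY : A ⊗[k] Y →ₗ[k] Y) :
    A ⊗[k] (X ⊗[k] Y) →ₗ[k] X ⊗[k] Y :=
  TensorProduct.map actX actY
    ∘ₗ (TensorProduct.tensorTensorTensorComm k A A X Y).toLinearMap
    ∘ₗ LinearMap.rTensor (X ⊗[k] Y) (Coalgebra.comul (R := k))

/-- The codiagonal coaction `x ⊗ y ↦ x₍₋₁₎y₍₋₁₎ ⊗ (x₍₀₎ ⊗ y₍₀₎)` on a tensor product. -/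
def tCoact (coactX : X →ₗ[k] A ⊗[k] X) (coactY : Y →ₗ[k] A ⊗[k] Y) :
    X ⊗[k] Y →ₗ[k] A ⊗[k] (X ⊗[k] Y) :=
  LinearMap.rTensor (X ⊗[k] Y) (LinearMap.mul' k A)
    ∘ₗ (TensorProduct.tensorTensorTensorComm k A X A Y).toLinearMap
    ∘ₗ TensorProduct.map coactX coactY

/-- The Yetter–Drinfel'd braiding `c_{X,Y} : x ⊗ y ↦ x₍₋₁₎ · y ⊗ x₍₀₎`. -/
def ydBraid (coactX : X →ₗ[k] A ⊗[k] X) (actY : A ⊗[k] Y →ₗ[k] Y) :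
    X ⊗[k] Y →ₗ[k] Y ⊗[k] X :=
  LinearMap.rTensor X actY
    ∘ₗ (TensorProduct.assoc k A Y X).symm.toLinearMap
    ∘ₗ LinearMap.lTensor A (TensorProduct.comm k X Y).toLinearMap
    ∘ₗ (TensorProduct.assoc k A X Y).toLinearMap
    ∘ₗ LinearMap.rTensor Y coactX

/-- The map `θ_X : x ↦ S(x₍₋₁₎) · x₍₀₎`. -/
def ydTheta (act : A ⊗[k] X →ₗ[k] X) (coact : X →ₗ[k] A ⊗[k] X) : X →ₗ[k] X :=
  act ∘ₗ LinearMap.rTensor X (HopfAlgebra.antipode (R := k)) ∘ₗ coact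

section Helpers

open Coalgebra HopfAlgebra

/-- Coassociativity in functional form. -/
lemma hopf_coassoc_sum {M : Type*} [AddCommGroup M] [Module k M] {ι : Type*} {a : A}
    (r : Coalgebra.Repr k a ι) (F : A ⊗[k] (A ⊗[k] A) →ₗ[k] M) :
    ∑ i ∈ r.index, F (TensorProduct.assoc k A A A (comul (R := k) (r.left i) ⊗ₜ[k] r.right i))
      = ∑ i ∈ r.index, F (r.left i ⊗ₜ[k] comul (R := k) (r.right i)) := by
  have h := congrArg F (Coalgebra.coassoc_apply (R := k) a)
  rw [← r.eq] at h
  simpa [map_sum] using h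

lemma yd_coassoc_sum {M : Type*} [AddCommGroup M] [Module k M]
    {act : A ⊗[k] X →ₗ[k] X} {coact : X →ₗ[k] A ⊗[k] X} (hX : IsYD act coact)
    {x : X} {s : Finset (A × X)} (hs : coact x = ∑ i ∈ s, i.1 ⊗ₜ[k] i.2)
    (F : A ⊗[k] (A ⊗[k] X) →ₗ[k] M) :
    ∑ i ∈ s, F (TensorProduct.assoc k A A X (comul (R := k) i.1 ⊗ₜ[k] i.2))
      = ∑ i ∈ s, F (i.1 ⊗ₜ[k] coact i.2) := by
  have h := congrArg F (LinearMap.congr_fun hX.coassoc x)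
  simpa [map_sum, hs] using h

lemma yd_counit_sum
    {act : A ⊗[k] X →ₗ[k] X} {coact : X →ₗ[k] A ⊗[k] X} (hX : IsYD act coact)
    {x : X} {s : Finset (A × X)} (hs : coact x = ∑ i ∈ s, i.1 ⊗ₜ[k] i.2) :
    ∑ i ∈ s, counit (R := k) i.1 • i.2 = x := by
  have h := LinearMap.congr_fun hX.counit_coact x
  simpa [map_sum, hs] using h

/-- Inner step for anti-comultiplicativity. -/
lemma hopf_inner (c y : A) :
    ∑ j ∈ (ℛ k y).index,
      (antipode k ((ℛ k y).left j) ⊗ₜ[k] c) * comul (R := k) ((ℛ k y).right j)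
      = (1 : A) ⊗ₜ[k] (c * y) := by
  let F : A ⊗[k] (A ⊗[k] A) →ₗ[k] A ⊗[k] A :=
    TensorProduct.map (LinearMap.mul' k A ∘ₗ (antipode k).rTensor A) (LinearMap.mulLeft k c)
      ∘ₗ (TensorProduct.assoc k A A A).symm.toLinearMap
  have hF : ∀ a t, F (a ⊗ₜ[k] t) = (antipode k a ⊗ₜ[k] c) * t := by
    intro a t
    induction t with
    | zero => simp
    | add u v hu hv => simp only [TensorProduct.tmul_add, map_add, hu, hv, mul_add]
    | tmul u v => simp [F]
  have h := hopf_coassoc_sum (ℛ k y) F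
  simp only [hF] at h
  rw [← h]
  simp only [F, LinearMap.comp_apply, LinearEquiv.coe_coe, LinearEquiv.symm_apply_apply,
    TensorProduct.map_tmul, mul_antipode_rTensor_comul_apply, LinearMap.mulLeft_apply,
    Algebra.algebraMap_eq_smul_one, TensorProduct.smul_tmul]
  rw [← TensorProduct.tmul_sum]
  simp only [← mul_smul_comm]
  rw [← Finset.mul_sum, sum_counit_smul]

open WithConv in
lemma hopf_comul_antipode (a : A) :
    comul (R := k) (antipode k a)
      = ∑ i ∈ (ℛ k a).index,
        antipode k ((ℛ k a).right i) ⊗ₜ[k] antipode k ((ℛ k a).left i) := by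
  let G : A →ₗ[k] A ⊗[k] A := TensorProduct.map (antipode k) (antipode k)
    ∘ₗ (TensorProduct.comm k A A).toLinearMap ∘ₗ comul
  have hG : toConv G * toConv (comul (R := k) (A := A)) = 1 := by
    ext h
    rw [(ℛ k h).convMul_apply]
    let F : A ⊗[k] (A ⊗[k] A) →ₗ[k] A ⊗[k] A :=
      LinearMap.mul' k (A ⊗[k] A) ∘ₗ TensorProduct.map (TensorProduct.map (antipode k) (antipode k)
        ∘ₗ (TensorProduct.comm k A A).toLinearMap) comul
        ∘ₗ (TensorProduct.assoc k A A A).symm.toLinearMap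
    have key := hopf_coassoc_sum (ℛ k h) F
    have h1 : ∀ x y, F (x ⊗ₜ[k] comul (R := k) y) = (1 : A) ⊗ₜ[k] (antipode k x * y) := by
      intro x y
      rw [← hopf_inner, ← (ℛ k y).eq]
      simp [F, TensorProduct.tmul_sum]
    simp only [h1] at key
    have h2 : ∀ x y, F (TensorProduct.assoc k A A A (comul (R := k) x ⊗ₜ[k] y))
        = G x * comul (R := k) y := by
      intro x y
      simp [F, G]
    simp only [h2] at key
    rw [← TensorProduct.tmul_sum, sum_antipode_mul_eq_algebraMap_counit] at key
    refine key.trans ?_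
    simp [Algebra.algebraMap_eq_smul_one, Algebra.TensorProduct.one_def]
  have := left_inv_eq_right_inv hG (LinearMap.comul_right_inv (R := k) (C := A))
  have h3 := LinearMap.congr_fun (WithConv.toConv_injective this) a
  refine Eq.trans h3.symm ?_
  simp only [G, LinearMap.comp_apply]
  rw [← (ℛ k a).eq]
  simp [map_sum]

variable {act : A ⊗[k] X →ₗ[k] X} {coact : X →ₗ[k] A ⊗[k] X}

lemma ydR_aux (a b : A) (x : X) :
    (TensorProduct.map (LinearMap.mul' k A) LinearMap.id)
      ((TensorProduct.assoc k A A X).symm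
        (LinearMap.lTensor A (TensorProduct.comm k X A).toLinearMap
          (TensorProduct.assoc k A X A (coact (act (a ⊗ₜ[k] x)) ⊗ₜ[k] b))))
      = LinearMap.rTensor X (LinearMap.mulRight k b) (coact (act (a ⊗ₜ[k] x))) := by
  induction coact (act (a ⊗ₜ[k] x)) with
  | zero => simp
  | add u v hu hv => simp only [TensorProduct.add_tmul, map_add, hu, hv]
  | tmul u v => simp

lemma ydL_aux (a b : A) (t : A ⊗[k] X) :
    TensorProduct.map (LinearMap.mul' k A) act
      (TensorProduct.tensorTensorTensorComm k A A A X ((a ⊗ₜ[k] b) ⊗ₜ[k] t))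
      = LinearMap.lTensor A (TensorProduct.curry act b)
        (LinearMap.rTensor X (LinearMap.mulLeft k a) t) := by
  induction t with
  | zero => simp
  | add u v hu hv => simp only [TensorProduct.tmul_add, map_add, hu, hv]
  | tmul u v => simp

/-- The Yetter–Drinfel'd condition as a sum, for an arbitrary expression of the coproduct. -/
lemma yd_sum (hX : IsYD act coact) {ι : Type*} {h : A} (s : Finset ι) (l r : ι → A)
    (hs : comul (R := k) h = ∑ i ∈ s, l i ⊗ₜ[k] r i) (x : X) :
    ∑ i ∈ s, LinearMap.lTensor A (TensorProduct.curry act (r i))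
        (LinearMap.rTensor X (LinearMap.mulLeft k (l i)) (coact x))
      = ∑ i ∈ s, LinearMap.rTensor X (LinearMap.mulRight k (r i))
          (coact (act (l i ⊗ₜ[k] x))) := by
  have := LinearMap.congr_fun hX.yd (h ⊗ₜ[k] x)
  simp only [ydL, ydR, LinearMap.comp_apply, LinearEquiv.coe_coe, TensorProduct.map_tmul,
    LinearMap.rTensor_tmul, hs, TensorProduct.sum_tmul, map_sum, ydL_aux,
    TensorProduct.assoc_tmul, LinearMap.lTensor_tmul, TensorProduct.comm_tmul,
    TensorProduct.assoc_symm_tmul, ydR_aux] at this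
  exact this

lemma theta_star (hX : IsYD act coact) (h : A) (x : X) :
    ∑ i ∈ (ℛ k h).index, act (antipode k ((ℛ k h).right i) ⊗ₜ[k]
      ydTheta act coact (act ((ℛ k h).left i ⊗ₜ[k] x)))
      = counit (R := k) h • ydTheta act coact x := by
  have key := congrArg (act ∘ₗ LinearMap.rTensor X (antipode k))
    (yd_sum hX _ _ _ (ℛ k h).eq.symm x)
  have hR : ∀ (b : A) (t : A ⊗[k] X), act (LinearMap.rTensor X (antipode k)
      (LinearMap.rTensor X (LinearMap.mulRight k b) t))
      = act (antipode k b ⊗ₜ[k] act (LinearMap.rTensor X (antipode k) t)) := by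
    intro b t
    induction t with
    | zero => simp
    | add u v hu hv => simp only [TensorProduct.tmul_add, map_add, hu, hv]
    | tmul u v => simp [antipode_mul_antidistrib, hX.act_mul]
  have hL : ∀ (a b : A) (u : A) (v : X), act (LinearMap.rTensor X (antipode k)
      (LinearMap.lTensor A (TensorProduct.curry act b)
        (LinearMap.rTensor X (LinearMap.mulLeft k a) (u ⊗ₜ[k] v))))
      = act (antipode k u ⊗ₜ[k] act ((antipode k a * b) ⊗ₜ[k] v)) := by
    intro a b u v
    simp [antipode_mul_antidistrib, hX.act_mul]
  simp only [map_sum, LinearMap.comp_apply, hR] at key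
  refine key.symm.trans ?_
  simp only [ydTheta, LinearMap.comp_apply]
  induction coact x with
  | zero => simp
  | add u v hu hv => simp only [map_add, Finset.sum_add_distrib, hu, hv, smul_add]
  | tmul u v =>
    simp only [hL]
    rw [← map_sum, ← TensorProduct.tmul_sum, ← map_sum, ← TensorProduct.sum_tmul,
      sum_antipode_mul_eq_smul]
    simp [← TensorProduct.smul_tmul', hX.act_one]

lemma theta_act (hX : IsYD act coact) (h : A) (x : X) :
    ydTheta act coact (act (h ⊗ₜ[k] x))
        = act (antipode k (antipode k h) ⊗ₜ[k] ydTheta act coact x) := by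
  let T : A →ₗ[k] X := ydTheta act coact ∘ₗ act ∘ₗ (TensorProduct.mk k A X).flip x
  let F : A ⊗[k] (A ⊗[k] A) →ₗ[k] X :=
    act ∘ₗ TensorProduct.map (antipode k ∘ₗ antipode k)
        (act ∘ₗ TensorProduct.map (antipode k) T)
      ∘ₗ (TensorProduct.assoc k A A A).toLinearMap
      ∘ₗ LinearMap.rTensor A (TensorProduct.comm k A A).toLinearMap
      ∘ₗ (TensorProduct.comm k A (A ⊗[k] A)).toLinearMap
  have hF : ∀ a b c, F (a ⊗ₜ[k] (b ⊗ₜ[k] c)) = act (antipode k (antipode k c) ⊗ₜ[k]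
      act (antipode k b ⊗ₜ[k] ydTheta act coact (act (a ⊗ₜ[k] x)))) := by
    intro a b c
    simp [F, T]
  have key := hopf_coassoc_sum (ℛ k h) F
  have h1 : ∀ a c, F (TensorProduct.assoc k A A A (comul (R := k) a ⊗ₜ[k] c))
      = counit (R := k) a • act (antipode k (antipode k c) ⊗ₜ[k] ydTheta act coact x) := by
    intro a c
    rw [← map_smul, ← TensorProduct.tmul_smul, ← theta_star hX, ← (ℛ k a).eq]
    simp only [TensorProduct.sum_tmul, map_sum, TensorProduct.assoc_tmul, hF,
      TensorProduct.tmul_sum]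
  have h2 : ∀ a c, F (a ⊗ₜ[k] comul (R := k) c)
      = counit (R := k) c • ydTheta act coact (act (a ⊗ₜ[k] x)) := by
    intro a c
    rw [← (ℛ k c).eq]
    simp only [TensorProduct.tmul_sum, map_sum, hF, ← hX.act_mul, ← antipode_mul_antidistrib]
    rw [← map_sum, ← TensorProduct.sum_tmul, ← map_sum, sum_mul_antipode_eq_smul]
    simp [← TensorProduct.smul_tmul', hX.act_one]
  simp only [h1, h2] at key
  have e1 : ∑ i ∈ (ℛ k h).index, counit (R := k) ((ℛ k h).right i) • (ℛ k h).left i = h := by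
    have := congrArg (TensorProduct.rid k A) (sum_tmul_counit_eq (ℛ k h))
    simpa only [map_sum, TensorProduct.rid_tmul, one_smul] using this
  have e2 := sum_counit_smul (ℛ k h)
  calc _ = ∑ i ∈ (ℛ k h).index, counit (R := k) ((ℛ k h).right i) •
            ydTheta act coact (act ((ℛ k h).left i ⊗ₜ[k] x)) := by
        conv_lhs => rw [← e1]
        simp only [TensorProduct.sum_tmul, map_sum, ← TensorProduct.smul_tmul', map_smul]
    _ = _ := key.symm
    _ = _ := by
        conv_rhs => rw [← e2]
        simp only [TensorProduct.sum_tmul, map_sum, ← TensorProduct.smul_tmul', map_smul]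

/-- `b ⊗ w ↦ S(b) w₍₋₁₎ ⊗ w₍₀₎`. -/
def ydI (coact : X →ₗ[k] A ⊗[k] X) : A ⊗[k] X →ₗ[k] A ⊗[k] X :=
  TensorProduct.lift ((LinearMap.rTensorHom X ∘ₗ LinearMap.mul k A ∘ₗ antipode k).compl₂ coact)

lemma ydI_tmul (b : A) (w : X) : ydI coact (b ⊗ₜ[k] w)
    = LinearMap.rTensor X (LinearMap.mulLeft k (antipode k b)) (coact w) := rfl

lemma ydI_coact (hX : IsYD act coact) (w : X) : ydI coact (coact w) = 1 ⊗ₜ[k] w := by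
  obtain ⟨s, hs⟩ := TensorProduct.exists_finset (coact w)
  let F : A ⊗[k] (A ⊗[k] X) →ₗ[k] A ⊗[k] X :=
    LinearMap.rTensor X (LinearMap.mul' k A ∘ₗ (antipode k).rTensor A)
      ∘ₗ (TensorProduct.assoc k A A X).symm.toLinearMap
  have hF : ∀ a t, F (a ⊗ₜ[k] t)
      = LinearMap.rTensor X (LinearMap.mulLeft k (antipode k a)) t := by
    intro a t
    induction t with
    | zero => simp
    | add u v hu hv => simp only [TensorProduct.tmul_add, map_add, hu, hv]
    | tmul u v => simp [F]
  have key := yd_coassoc_sum hX hs F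
  simp only [hF] at key
  rw [hs]
  simp only [map_sum, ydI_tmul]
  rw [← key]
  conv_rhs => rw [← yd_counit_sum hX hs]
  simp [F, Algebra.algebraMap_eq_smul_one, TensorProduct.tmul_sum, TensorProduct.smul_tmul]

lemma theta_dagger (hX : IsYD act coact) {x : X} {s : Finset (A × X)}
    (hs : coact x = ∑ i ∈ s, i.1 ⊗ₜ[k] i.2) :
    ∑ i ∈ s, LinearMap.rTensor X (LinearMap.mulRight k (antipode k i.1))
      (coact (ydTheta act coact i.2)) = 1 ⊗ₜ[k] ydTheta act coact x := by
  let P : A ⊗[k] (A ⊗[k] X) →ₗ[k] A ⊗[k] X :=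
    TensorProduct.lift ((LinearMap.rTensorHom X ∘ₗ (LinearMap.mul k A).flip ∘ₗ
      antipode k).compl₂ (coact ∘ₗ act ∘ₗ LinearMap.rTensor X (antipode k)))
  let Q : A ⊗[k] (A ⊗[k] X) →ₗ[k] A ⊗[k] X :=
    TensorProduct.lift ((LinearMap.lTensorHom A ∘ₗ TensorProduct.curry act ∘ₗ
      antipode k).compl₂ (ydI coact))
  have hP : ∀ a t, P (a ⊗ₜ[k] t) = LinearMap.rTensor X (LinearMap.mulRight k (antipode k a))
      (coact (act (LinearMap.rTensor X (antipode k) t))) := fun a t => rfl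
  have hQ : ∀ a t, Q (a ⊗ₜ[k] t) = LinearMap.lTensor A (TensorProduct.curry act (antipode k a))
      (ydI coact t) := fun a t => rfl
  have hPQ : ∀ (a : A) (w : X), P (TensorProduct.assoc k A A X (comul (R := k) a ⊗ₜ[k] w))
      = Q (TensorProduct.assoc k A A X (comul (R := k) a ⊗ₜ[k] w)) := by
    intro a w
    have := yd_sum hX _ _ _ (hopf_comul_antipode (k := k) a) w
    rw [← (ℛ k a).eq]
    simp only [TensorProduct.sum_tmul, map_sum, TensorProduct.assoc_tmul, hP, hQ, ydI_tmul,
      LinearMap.rTensor_tmul]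
    exact this.symm
  have k1 := yd_coassoc_sum hX hs P
  have k2 := yd_coassoc_sum hX hs Q
  simp only [hPQ] at k1
  have k3 := k1.symm.trans k2
  simp only [hP, hQ, ydI_coact hX] at k3
  refine Eq.trans k3 ?_
  simp only [LinearMap.lTensor_tmul, TensorProduct.curry_apply, ydTheta, LinearMap.comp_apply, hs,
    map_sum, LinearMap.rTensor_tmul, TensorProduct.tmul_sum]

lemma theta_coact (hX : IsYD act coact) (x : X) :
    coact (ydTheta act coact x) = LinearMap.rTensor X (antipode k (A := A) ∘ₗ antipode k)
      (LinearMap.lTensor A (ydTheta act coact) (coact x)) := by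
  obtain ⟨s, hs⟩ := TensorProduct.exists_finset (coact x)
  let J : A ⊗[k] X →ₗ[k] A ⊗[k] X :=
    TensorProduct.lift ((LinearMap.rTensorHom X ∘ₗ (LinearMap.mul k A).flip ∘ₗ
      antipode k).compl₂ (coact ∘ₗ ydTheta act coact))
  let P : A ⊗[k] (A ⊗[k] X) →ₗ[k] A ⊗[k] X :=
    TensorProduct.lift ((LinearMap.rTensorHom X ∘ₗ (LinearMap.mul k A).flip ∘ₗ
      antipode k ∘ₗ antipode k).compl₂ J)
  have hJ : ∀ a w, J (a ⊗ₜ[k] w) = LinearMap.rTensor X (LinearMap.mulRight k (antipode k a))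
      (coact (ydTheta act coact w)) := fun a t => rfl
  have hP : ∀ a t, P (a ⊗ₜ[k] t) = LinearMap.rTensor X
      (LinearMap.mulRight k (antipode k (antipode k a))) (J t) := fun a t => rfl
  have hJc : ∀ w, J (coact w) = 1 ⊗ₜ[k] ydTheta act coact w := by
    intro w
    obtain ⟨s, hs⟩ := TensorProduct.exists_finset (coact w)
    rw [← theta_dagger hX hs, hs]
    simp only [map_sum, hJ]
  have h1 : ∀ (a : A) (w : X), P (TensorProduct.assoc k A A X (comul (R := k) a ⊗ₜ[k] w))
      = counit (R := k) a • coact (ydTheta act coact w) := by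
    intro a w
    rw [← (ℛ k a).eq]
    simp only [TensorProduct.sum_tmul, map_sum, TensorProduct.assoc_tmul, hP, hJ]
    induction coact (ydTheta act coact w) with
    | zero => simp
    | add u v hu hv => simp only [map_add, Finset.sum_add_distrib, hu, hv, smul_add]
    | tmul u v =>
      simp only [LinearMap.rTensor_tmul, LinearMap.mulRight_apply, mul_assoc,
        ← antipode_mul_antidistrib]
      rw [← TensorProduct.sum_tmul, ← Finset.mul_sum, ← map_sum, sum_antipode_mul_eq_smul]
      simp [TensorProduct.smul_tmul']
  have key := yd_coassoc_sum hX hs P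
  simp only [h1, hP, hJc] at key
  calc _ = ∑ i ∈ s, counit (R := k) i.1 • coact (ydTheta act coact i.2) := by
        conv_lhs => rw [← yd_counit_sum hX hs]
        simp only [map_sum, map_smul]
    _ = _ := key
    _ = _ := by
        rw [hs]
        simp [map_sum]

end Helpers

/-- For a left Yetter–Drinfel'd module `X` over a Hopf algebra `A`,
the map `θ_X(x) = S(x₍₋₁₎)·x₍₀₎` satisfies `θ_X(h·x) = S²(h)·θ_X(x)` and
`δ(θ_X(x)) = S²(x₍₋₁₎) ⊗ θ_X(x₍₀₎)`. -/
theorem ydTheta_properties (act : A ⊗[k] X →ₗ[k] X) (coact : X →ₗ[k] A ⊗[k] X)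
    (hX : IsYD act coact) :
    (∀ (h : A) (x : X),
      ydTheta act coact (act (h ⊗ₜ[k] x))
        = act ((HopfAlgebra.antipode (R := k) (HopfAlgebra.antipode (R := k) h))
            ⊗ₜ[k] ydTheta act coact x))
    ∧ (∀ x : X,
      coact (ydTheta act coact x)
        = LinearMap.rTensor X
            ((HopfAlgebra.antipode (R := k) (A := A)) ∘ₗ HopfAlgebra.antipode (R := k))
            (LinearMap.lTensor A (ydTheta act coact) (coact x))) := by
  exact ⟨theta_act hX, theta_coact hX⟩

end
end

section
/- Let A be a Hopf algebra over a field k with antipode S and let X and Y be left Yetter–Drinfel'd modules over A. Let c_{X,Y}(x⊗y) = x_{(-1)}·y ⊗ x_{(0)} denote the Yetter–Drinfel'd braiding, let θ_{Y⊗X} be the map u ↦ S(u_{(-1)})·u_{(0)} on the tensor product Yetter–Drinfel'd module Y ⊗ X, and let θ_X, θ_Y be the corresponding maps on X and Y. Then c_{Y,X}(θ_{Y⊗X}(c_{X,Y}(x⊗y))) = θ_X(x) ⊗ θ_Y(y) for all x ∈ X, y ∈ Y. -/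
open TensorProduct

noncomputable section

variable {k : Type*} [Field k]
variable {A : Type*} [Ring A] [HopfAlgebra k A]
variable {X Y Z : Type*} [AddCommGroup X] [Module k X] [AddCommGroup Y] [Module k Y]
  [AddCommGroup Z] [Module k Z]

section Helpers

open Coalgebra WithConv

/-- The identity `Δ(S(a₁)) (a₂ ⊗ 1) = 1 ⊗ S(a)`. -/
lemma comul_antipode_mul_left (a : A) :
    LinearMap.mul' k (A ⊗[k] A)
      (TensorProduct.map (Coalgebra.comul (R := k) ∘ₗ HopfAlgebra.antipode k (A := A))
        (Algebra.TensorProduct.includeLeft (R := k) (S := k) (A := A) (B := A)).toLinearMap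
        (Coalgebra.comul (R := k) a)) = (1 : A) ⊗ₜ[k] HopfAlgebra.antipode k a := by
  let D : WithConv (A →ₗ[k] A ⊗[k] A) := toConv (Coalgebra.comul (R := k))
  let DS : WithConv (A →ₗ[k] A ⊗[k] A) :=
    toConv (Coalgebra.comul (R := k) ∘ₗ HopfAlgebra.antipode k (A := A))
  let f1 := (Algebra.TensorProduct.includeLeft (R := k) (S := k) (A := A) (B := A))
  let f2 := (Algebra.TensorProduct.includeRight (R := k) (A := A) (B := A))
  let i1 : WithConv (A →ₗ[k] A ⊗[k] A) := toConv f1.toLinearMap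
  let i2 : WithConv (A →ₗ[k] A ⊗[k] A) := toConv f2.toLinearMap
  let i2S : WithConv (A →ₗ[k] A ⊗[k] A) :=
    toConv (f2.toLinearMap ∘ₗ HopfAlgebra.antipode k (A := A))
  have h1 : DS * D = 1 := by
    have := LinearMap.algHom_comp_convMul_distrib (Bialgebra.comulAlgHom k A)
      (toConv (HopfAlgebra.antipode k (A := A))) (toConv LinearMap.id)
    rw [LinearMap.antipode_mul_id] at this
    ext x
    have := LinearMap.congr_fun this x
    simp [D, DS] at this ⊢
    exact this.symm
  have h2 : i2 * i2S = 1 := by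
    have := LinearMap.algHom_comp_convMul_distrib f2
      (toConv LinearMap.id) (toConv (HopfAlgebra.antipode k (A := A)))
    rw [LinearMap.id_mul_antipode] at this
    ext x
    have := LinearMap.congr_fun this x
    simp [i2, i2S] at this ⊢
    exact this.symm
  have h3 : i1 * i2 = D := by
    ext x
    simp only [LinearMap.convMul_apply, i1, i2, D]
    have : LinearMap.mul' k (A ⊗[k] A) ∘ₗ TensorProduct.map f1.toLinearMap f2.toLinearMap
        = LinearMap.id := by
      ext a b; simp [f1, f2]
    exact LinearMap.congr_fun this (Coalgebra.comul (R := k) x)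
  have h4 : DS * i1 = i2S := by
    calc DS * i1 = DS * (i1 * (i2 * i2S)) := by rw [h2, mul_one]
      _ = (DS * (i1 * i2)) * i2S := by simp only [mul_assoc]
      _ = i2S := by rw [h3, h1, one_mul]
  exact congrArg (fun f : WithConv (A →ₗ[k] A ⊗[k] A) => f a) h4

/-- Componentwise action of `A ⊗ A` on `Y ⊗ X`. -/
def actTwo (actY : A ⊗[k] Y →ₗ[k] Y) (actX : A ⊗[k] X →ₗ[k] X) :
    (A ⊗[k] A) ⊗[k] (Y ⊗[k] X) →ₗ[k] Y ⊗[k] X :=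
  TensorProduct.map actY actX
    ∘ₗ (TensorProduct.tensorTensorTensorComm k A A Y X).toLinearMap

lemma actTwo_tmul (actY : A ⊗[k] Y →ₗ[k] Y) (actX : A ⊗[k] X →ₗ[k] X) (a b : A) (y : Y) (x : X) :
    actTwo actY actX ((a ⊗ₜ b) ⊗ₜ (y ⊗ₜ x)) = actY (a ⊗ₜ y) ⊗ₜ[k] actX (b ⊗ₜ x) := by
  simp [actTwo]

lemma tAct_eq (actY : A ⊗[k] Y →ₗ[k] Y) (actX : A ⊗[k] X →ₗ[k] X) (h : A) (u : Y ⊗[k] X) :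
    tAct actY actX (h ⊗ₜ u) = actTwo actY actX (Coalgebra.comul (R := k) h ⊗ₜ u) := by
  simp [tAct, actTwo]

lemma actTwo_mul {actY : A ⊗[k] Y →ₗ[k] Y} {actX : A ⊗[k] X →ₗ[k] X}
    {coactX : X →ₗ[k] A ⊗[k] X} {coactY : Y →ₗ[k] A ⊗[k] Y}
    (hX : IsYD actX coactX) (hY : IsYD actY coactY) (s t : A ⊗[k] A) (u : Y ⊗[k] X) :
    actTwo actY actX ((s * t) ⊗ₜ u) = actTwo actY actX (s ⊗ₜ actTwo actY actX (t ⊗ₜ u)) := by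
  induction u with
  | zero => simp
  | add u v hu hv => simp only [tmul_add, map_add, hu, hv]
  | tmul y x =>
    induction s with
    | zero => simp
    | add u v hu hv => simp only [add_mul, add_tmul, map_add, hu, hv]
    | tmul a b =>
      induction t with
      | zero => simp
      | add u v hu hv => simp only [mul_add, add_tmul, tmul_add, map_add, hu, hv]
      | tmul c d =>
        simp [actTwo_tmul, hX.act_mul, hY.act_mul]

lemma tAct_mul {actY : A ⊗[k] Y →ₗ[k] Y} {actX : A ⊗[k] X →ₗ[k] X}
    {coactX : X →ₗ[k] A ⊗[k] X} {coactY : Y →ₗ[k] A ⊗[k] Y}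
    (hX : IsYD actX coactX) (hY : IsYD actY coactY) (a b : A) (u : Y ⊗[k] X) :
    tAct actY actX ((a * b) ⊗ₜ u) = tAct actY actX (a ⊗ₜ tAct actY actX (b ⊗ₜ u)) := by
  simp only [tAct_eq, Bialgebra.comul_mul, actTwo_mul hX hY]

/-- The braiding as a function of the coaction of the first factor. -/
def brAux (actY : A ⊗[k] Y →ₗ[k] Y) : (A ⊗[k] X) ⊗[k] Y →ₗ[k] Y ⊗[k] X :=
  LinearMap.rTensor X actY
    ∘ₗ (TensorProduct.assoc k A Y X).symm.toLinearMap
    ∘ₗ LinearMap.lTensor A (TensorProduct.comm k X Y).toLinearMap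
    ∘ₗ (TensorProduct.assoc k A X Y).toLinearMap

lemma brAux_tmul (actY : A ⊗[k] Y →ₗ[k] Y) (a : A) (x : X) (y : Y) :
    brAux actY ((a ⊗ₜ x) ⊗ₜ y) = actY (a ⊗ₜ y) ⊗ₜ[k] x := by
  simp [brAux]

lemma ydBraid_tmul (coactX : X →ₗ[k] A ⊗[k] X) (actY : A ⊗[k] Y →ₗ[k] Y) (x : X) (y : Y) :
    ydBraid coactX actY (x ⊗ₜ y) = brAux actY (coactX x ⊗ₜ y) := by
  simp [ydBraid, brAux]

/-- `S(x₍₋₁₎) · c(x₍₀₎ ⊗ y) = y ⊗ θ(x)`. -/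
lemma antipode_act_braid {actY : A ⊗[k] Y →ₗ[k] Y} {actX : A ⊗[k] X →ₗ[k] X}
    {coactX : X →ₗ[k] A ⊗[k] X} {coactY : Y →ₗ[k] A ⊗[k] Y}
    (hX : IsYD actX coactX) (hY : IsYD actY coactY) (x : X) (y : Y) :
    tAct actY actX (TensorProduct.map (HopfAlgebra.antipode k (A := A))
      (ydBraid coactX actY ∘ₗ (TensorProduct.mk k X Y).flip y) (coactX x))
      = y ⊗ₜ[k] ydTheta actX coactX x := by
  let T : A ⊗[k] (A ⊗[k] X) →ₗ[k] Y ⊗[k] X :=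
    tAct actY actX ∘ₗ TensorProduct.map (HopfAlgebra.antipode k (A := A))
      (brAux actY ∘ₗ (TensorProduct.mk k (A ⊗[k] X) Y).flip y)
  have e1 : TensorProduct.map (HopfAlgebra.antipode k (A := A))
      (ydBraid coactX actY ∘ₗ (TensorProduct.mk k X Y).flip y)
      = TensorProduct.map (HopfAlgebra.antipode k (A := A))
      (brAux actY ∘ₗ (TensorProduct.mk k (A ⊗[k] X) Y).flip y) ∘ₗ LinearMap.lTensor A coactX := by
    ext a x
    simp [ydBraid_tmul]
  have e2 := LinearMap.congr_fun hX.coassoc x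
  simp only [LinearMap.comp_apply] at e2
  rw [e1, LinearMap.comp_apply, ← e2]
  simp only [ydTheta, LinearMap.comp_apply]
  generalize coactX x = w
  induction w with
  | zero => simp
  | add u v hu hv => simp only [map_add, tmul_add, hu, hv]
  | tmul a x0 =>
    have key : ∀ t : A ⊗[k] A, T (TensorProduct.assoc k A A X (t ⊗ₜ x0)) =
        actTwo actY actX (LinearMap.mul' k (A ⊗[k] A)
      (TensorProduct.map (Coalgebra.comul (R := k) ∘ₗ HopfAlgebra.antipode k (A := A))
        (Algebra.TensorProduct.includeLeft (R := k) (S := k) (A := A) (B := A)).toLinearMap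
        t) ⊗ₜ (y ⊗ₜ x0)) := by
      intro t
      induction t with
      | zero => simp
      | add u v hu hv => simp only [map_add, add_tmul, hu, hv]
      | tmul b c =>
        simp [T, brAux_tmul, tAct_eq, actTwo_mul hX hY, actTwo_tmul, hX.act_one]
    have := key (Coalgebra.comul (R := k) a)
    rw [comul_antipode_mul_left, actTwo_tmul, hY.act_one] at this
    simpa [T] using this

/-- The braiding is `A`-linear. -/
lemma braid_linear {actY : A ⊗[k] Y →ₗ[k] Y} {actX : A ⊗[k] X →ₗ[k] X}
    {coactX : X →ₗ[k] A ⊗[k] X} {coactY : Y →ₗ[k] A ⊗[k] Y}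
    (hX : IsYD actX coactX) (hY : IsYD actY coactY) (h : A) (u : X ⊗[k] Y) :
    ydBraid coactX actY (tAct actX actY (h ⊗ₜ u)) =
      tAct actY actX (h ⊗ₜ ydBraid coactX actY u) := by
  induction u with
  | zero => simp
  | add u v hu hv => simp only [tmul_add, map_add, hu, hv]
  | tmul x y =>
    have e := LinearMap.congr_fun hX.yd (h ⊗ₜ x)
    have e' : brAux actY (ydL actX coactX (h ⊗ₜ x) ⊗ₜ y) =
      brAux actY (ydR actX coactX (h ⊗ₜ x) ⊗ₜ y) := by rw [e]
    rw [ydBraid_tmul, tAct_eq, tAct_eq]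
    simp only [ydL, ydR, LinearMap.comp_apply, TensorProduct.map_tmul, LinearMap.rTensor_tmul] at e'
    generalize Coalgebra.comul (R := k) h = t at e' ⊢
    trans brAux actY ((TensorProduct.map (LinearMap.mul' k A) actX
      (TensorProduct.tensorTensorTensorComm k A A A X (t ⊗ₜ coactX x))) ⊗ₜ y)
    · refine Eq.trans ?_ e'.symm
      clear e e'
      induction t with
      | zero => simp
      | add u v hu hv => simp only [map_add, add_tmul, hu, hv]
      | tmul b c =>
        simp [actTwo_tmul, ydBraid_tmul]
        generalize coactX (actX (b ⊗ₜ x)) = w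
        induction w with
        | zero => simp
        | add u v hu hv => simp only [map_add, add_tmul, tmul_add, hu, hv]
        | tmul d z => simp [brAux_tmul, hY.act_mul]
    · clear e e'
      generalize coactX x = w
      induction w with
      | zero => simp
      | add u v hu hv => simp only [map_add, add_tmul, tmul_add, hu, hv]
      | tmul d z =>
        induction t with
        | zero => simp
        | add u v hu hv => simp only [map_add, add_tmul, hu, hv]
        | tmul b c => simp [actTwo_tmul, brAux_tmul, hY.act_mul]

/-- The braiding is `A`-colinear. -/
lemma braid_colinear {actY : A ⊗[k] Y →ₗ[k] Y} {actX : A ⊗[k] X →ₗ[k] X}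
    {coactX : X →ₗ[k] A ⊗[k] X} {coactY : Y →ₗ[k] A ⊗[k] Y}
    (hX : IsYD actX coactX) (hY : IsYD actY coactY) (x : X) (y : Y) :
    tCoact coactY coactX (ydBraid coactX actY (x ⊗ₜ y)) =
      LinearMap.lTensor A (ydBraid coactX actY) (tCoact coactX coactY (x ⊗ₜ y)) := by
  let M : (A ⊗[k] Y) ⊗[k] (A ⊗[k] X) →ₗ[k] A ⊗[k] (Y ⊗[k] X) :=
    LinearMap.rTensor (Y ⊗[k] X) (LinearMap.mul' k A)
      ∘ₗ (TensorProduct.tensorTensorTensorComm k A Y A X).toLinearMap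
  -- `a ⊗ (b ⊗ z) ↦ (a y)₋₁ b ⊗ (a y)₀ ⊗ z`
  let P : A ⊗[k] (A ⊗[k] X) →ₗ[k] A ⊗[k] (Y ⊗[k] X) :=
    M ∘ₗ LinearMap.rTensor (A ⊗[k] X) (coactY ∘ₗ actY ∘ₗ (TensorProduct.mk k A Y).flip y)
  -- `a ⊗ (b ⊗ z) ↦ a y₋₁ ⊗ b y₀ ⊗ z`
  let Q : A ⊗[k] (A ⊗[k] X) →ₗ[k] A ⊗[k] (Y ⊗[k] X) :=
    LinearMap.lTensor A (brAux actY)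
      ∘ₗ LinearMap.rTensor ((A ⊗[k] X) ⊗[k] Y) (LinearMap.mul' k A)
      ∘ₗ (TensorProduct.tensorTensorTensorComm k A (A ⊗[k] X) A Y).toLinearMap
      ∘ₗ (TensorProduct.mk k (A ⊗[k] (A ⊗[k] X)) (A ⊗[k] Y)).flip (coactY y)
  have hP : tCoact coactY coactX (ydBraid coactX actY (x ⊗ₜ y)) =
      P (LinearMap.lTensor A coactX (coactX x)) := by
    rw [ydBraid_tmul]
    generalize coactX x = w
    induction w with
    | zero => simp
    | add u v hu hv => simp only [map_add, add_tmul, hu, hv]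
    | tmul d z => simp [brAux_tmul, tCoact, P, M]
  have hQ : LinearMap.lTensor A (ydBraid coactX actY) (tCoact coactX coactY (x ⊗ₜ y)) =
      Q (LinearMap.lTensor A coactX (coactX x)) := by
    simp only [tCoact, Q, LinearMap.comp_apply, TensorProduct.map_tmul, LinearMap.flip_apply,
      TensorProduct.mk_apply]
    generalize coactX x = w
    generalize coactY y = v
    induction w with
    | zero => simp
    | add u v hu hv => simp only [map_add, add_tmul, hu, hv]
    | tmul d z =>
      induction v with
      | zero => simp
      | add u v hu hv => simp only [map_add, tmul_add, hu, hv]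
      | tmul c y0 => simp [ydBraid_tmul]
  have e2 := LinearMap.congr_fun hX.coassoc x
  simp only [LinearMap.comp_apply] at e2
  rw [hP, hQ, ← e2]
  generalize coactX x = w
  induction w with
  | zero => simp
  | add u v hu hv => simp only [map_add, hu, hv]
  | tmul a z =>
    have e := LinearMap.congr_fun hY.yd (a ⊗ₜ y)
    let J : A ⊗[k] Y →ₗ[k] A ⊗[k] (Y ⊗[k] X) :=
      LinearMap.lTensor A ((TensorProduct.mk k Y X).flip z)
    have e' : J (ydL actY coactY (a ⊗ₜ y)) = J (ydR actY coactY (a ⊗ₜ y)) := by rw [e]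
    simp only [ydL, ydR, LinearMap.comp_apply, TensorProduct.map_tmul, LinearMap.rTensor_tmul] at e'
    simp only [LinearMap.rTensor_tmul]
    generalize Coalgebra.comul (R := k) a = t at e' ⊢
    refine Eq.trans ?_ (e'.symm.trans ?_)
    · clear e e' e2 hP hQ
      induction t with
      | zero => simp
      | add u v hu hv => simp only [map_add, add_tmul, hu, hv]
      | tmul b c =>
        simp [P, M, J]
        generalize coactY (actY (b ⊗ₜ y)) = w
        induction w with
        | zero => simp
        | add u v hu hv => simp only [map_add, add_tmul, hu, hv]
        | tmul d z => simp
    · clear e e' e2 hP hQ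
      simp only [Q, LinearMap.comp_apply, LinearMap.flip_apply, TensorProduct.mk_apply]
      clear P Q M
      generalize coactY y = w
      induction w with
      | zero => simp
      | add u v hu hv => simp only [map_add, tmul_add, hu, hv]
      | tmul d y0 =>
        induction t with
        | zero => simp
        | add u v hu hv => simp only [map_add, add_tmul, hu, hv]
        | tmul b c => simp [J, brAux_tmul]

end Helpers

/-- For left Yetter–Drinfel'd modules `X`, `Y` over a Hopf algebra
`A`, with `c` the Yetter–Drinfel'd braiding and `θ` the map `u ↦ S(u₍₋₁₎)·u₍₀₎`
(on `X`, on `Y`, and on the tensor product Yetter–Drinfel'd module `Y ⊗ X`), one has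
`c_{Y,X}(θ_{Y⊗X}(c_{X,Y}(x ⊗ y))) = θ_X(x) ⊗ θ_Y(y)`. -/
theorem ydTheta_braiding (actX : A ⊗[k] X →ₗ[k] X) (coactX : X →ₗ[k] A ⊗[k] X)
    (actY : A ⊗[k] Y →ₗ[k] Y) (coactY : Y →ₗ[k] A ⊗[k] Y)
    (hX : IsYD actX coactX) (hY : IsYD actY coactY) (x : X) (y : Y) :
    ydBraid coactY actX
        (ydTheta (tAct actY actX) (tCoact coactY coactX)
          (ydBraid coactX actY (x ⊗ₜ[k] y)))
      = (ydTheta actX coactX x) ⊗ₜ[k] (ydTheta actY coactY y) := by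
  have h1 : ydTheta (tAct actY actX) (tCoact coactY coactX) (ydBraid coactX actY (x ⊗ₜ[k] y)) =
      tAct actY actX (TensorProduct.map (HopfAlgebra.antipode k (A := A)) (ydBraid coactX actY)
        (tCoact coactX coactY (x ⊗ₜ y))) := by
    simp only [ydTheta, LinearMap.comp_apply]
    rw [braid_colinear hX hY, ← LinearMap.comp_apply (LinearMap.rTensor _ _),
      LinearMap.rTensor_comp_lTensor]
  -- contract the coaction of `x` first
  have h2 : ∀ (d : A) (y0 : Y), ∀ w : A ⊗[k] X,
      ydBraid coactY actX (tAct actY actX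
        (TensorProduct.map (HopfAlgebra.antipode k (A := A)) (ydBraid coactX actY)
        (LinearMap.rTensor (X ⊗[k] Y) (LinearMap.mul' k A)
          (TensorProduct.tensorTensorTensorComm k A X A Y (w ⊗ₜ (d ⊗ₜ y0)))))) =
      tAct actX actY (HopfAlgebra.antipode k d ⊗ₜ ydBraid coactY actX (tAct actY actX
        (TensorProduct.map (HopfAlgebra.antipode k (A := A))
          (ydBraid coactX actY ∘ₗ (TensorProduct.mk k X Y).flip y0) w))) := by
    intro d y0 w
    induction w with
    | zero => simp
    | add u v hu hv => simp only [map_add, add_tmul, tmul_add, hu, hv]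
    | tmul c z =>
      simp [HopfAlgebra.antipode_mul_antidistrib, tAct_mul hX hY, braid_linear hY hX]
  rw [h1, ← antipode_act_braid hY hX]
  simp only [tCoact, LinearMap.comp_apply, TensorProduct.map_tmul, LinearEquiv.coe_coe]
  generalize coactY y = v
  induction v with
  | zero => simp
  | add u v hu hv => simp only [map_add, tmul_add, hu, hv]
  | tmul d y0 =>
    rw [h2, antipode_act_braid hX hY]
    simp

end
end
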